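/- Exclusive priorities of tokens satisfying the Prefix Last-Token Condition: let s be a nonempty string and let t be a non-atomic canonical token that is a suffix of s and satisfies the Prefix Last-Token Condition with respect to s, with canonical rule r_j. Then the token list φ_{j−1}(s) ends with exactly the two tokens pre(t) and suc(t); that is, φ_{j−1}(s) = η ++ [pre(t), suc(t)] for some token list η. -/

import Mathlib

/-!
Common BPE formalization preamble.

A token is a (nonempty) string over the alphabet `α`, modeled as `List α`.
A merge rule is a pair of tokens; a dictionary is an ordered list of rules
(earlier rules have strictly higher priority).
-/

namespace BPE

variable {α : Type*} [DecidableEq α]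

/-- A token is a string over the alphabet (nonemptiness is imposed by hypotheses). -/
abbrev Token (α : Type*) := List α

/-- A merge rule is an ordered pair of tokens. -/
abbrev Rule (α : Type*) := Token α × Token α

/-- A dictionary is an ordered list of merge rules; earlier = higher priority. -/
abbrev Dict (α : Type*) := List (Rule α)

/-- Apply a single merge rule to a token list, scanning left to right and replacing
each adjacent occurrence of `r.1` followed by `r.2` by the concatenated token,
resuming the scan after the newly formed token (no overlaps). -/
def applyRule (r : Rule α) : List (Token α) → List (Token α)
  | [] => []
  | [t] => [t]
  | t :: u :: rest =>
      if t = r.1 ∧ u = r.2 then (r.1 ++ r.2) :: applyRule r rest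
      else t :: applyRule r (u :: rest)

/-- `φ₀(s)`: the list of single-character tokens of `s`. -/
def phi0 (s : List α) : List (Token α) := s.map (fun c => [c])

/-- `φ_k(s)`: the token list after applying the first `k` rules of `D` to `s`. -/
def phiK (D : Dict α) (k : ℕ) (s : List α) : List (Token α) :=
  (D.take k).foldl (fun φ r => applyRule r φ) (phi0 s)

/-- The BPE tokenization `𝕋_D(s)`. -/
def tokenize (D : Dict α) (s : List α) : List (Token α) :=
  phiK D D.length s

/-- Detokenization `π`: concatenation of the tokens. -/
def detok (φ : List (Token α)) : List α := φ.flatten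

/-- A dictionary is valid if all rule components are genuine (nonempty) tokens. -/
def ValidDict (D : Dict α) : Prop := ∀ r ∈ D, r.1 ≠ [] ∧ r.2 ≠ []

/-- A token `t` is canonical if `𝕋_D(t) = [t]`. -/
def IsCanonical (D : Dict α) (t : Token α) : Prop := tokenize D t = [t]

/-- The last token `θ(s)`: last element of `𝕋_D(s)` (defaulting to `[]`). -/
def theta (D : Dict α) (s : List α) : Token α := (tokenize D s).getLastD []

/-- `j` (0-based) is the index of the canonical rule of `t`:
`φ_j(t)` has exactly two tokens and `φ_{j+1}(t) = [t]`. -/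
def IsCanonicalRuleIdx (D : Dict α) (t : Token α) (j : ℕ) : Prop :=
  j < D.length ∧ (phiK D j t).length = 2 ∧ phiK D (j + 1) t = [t]

open Classical in
/-- The (0-based) index of the canonical rule of `t` (junk value `0` if none exists). -/
noncomputable def canonIdx (D : Dict α) (t : Token α) : ℕ :=
  if h : ∃ j, IsCanonicalRuleIdx D t j then h.choose else 0

/-- Predecessor `pre(t)`: first token of the two-token stage `φ_{j-1}(t)`. -/
noncomputable def pre (D : Dict α) (t : Token α) : Token α :=
  (phiK D (canonIdx D t) t).headD []

/-- Successor `suc(t)`: second token of the two-token stage `φ_{j-1}(t)`. -/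
noncomputable def suc (D : Dict α) (t : Token α) : Token α :=
  (phiK D (canonIdx D t) t).getLastD []

/-- `InPath D x a` means `a ∈ P(x)`: `a` is obtained from `x` by iterating `suc`,
i.e. `a` lies on the ancestor path of `x` in the Successor Forest. -/
def InPath (D : Dict α) (x a : Token α) : Prop :=
  ∃ n : ℕ, (suc D)^[n] x = a

/-- `s` with the suffix `u` removed. -/
def dropSuffix (s u : List α) : List α := s.take (s.length - u.length)

/-- The Prefix Last-Token Condition of the canonical suffix token `t`
with respect to the string `s`. Atomic tokens satisfy it by definition;
a non-atomic token must satisfy Reachability and Priority dominance. -/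
def PLTC (D : Dict α) (s t : Token α) : Prop :=
  t.length = 1 ∨
    (1 < t.length ∧
      InPath D (theta D (dropSuffix s (suc D t))) (pre D t) ∧
      (theta D (dropSuffix s (suc D t)) ≠ pre D t →
        ∀ u : Token α, 1 < u.length → IsCanonical D u → suc D u = pre D t →
          InPath D (theta D (dropSuffix s (suc D t))) u →
          canonIdx D t < canonIdx D u))

/-!
Write `s = w ++ pre t ++ suc t`, let `j` be the index of the canonical rule of `t`, and call a place
in a string a boundary at stage `k` if no token straddles it after `k` rules. Boundaries only
disappear as `k` grows, and whether one disappears depends only on the tokens next to it.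

Let `z` be the last token of the tokenization of `w ++ pre t`. If `z = pre t`, the boundary in front
of `pre t` is never lost. Otherwise it lies inside `z`, where undoing the merges along the ancestor
path shows that it survives until the canonical rule of the child of `pre t` on that path fires; by
priority dominance this is later than stage `j`. Appending `suc t` does not affect it, because the
boundary between `pre t` and `suc t` also survives to stage `j`. So at stage `j` the tokens of `s`
are those of `w` followed by those of `t`, which are `pre t` and `suc t`.
-/

section ApplyRule

variable {r : Rule α} {φ : List (Token α)}

theorem flatten_applyRule (r : Rule α) (φ : List (Token α)) :
    (applyRule r φ).flatten = φ.flatten := by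
  fun_induction applyRule r φ <;> simp_all

theorem length_le_two_mul_length_applyRule (r : Rule α) (φ : List (Token α)) :
    φ.length ≤ 2 * (applyRule r φ).length := by
  fun_induction applyRule r φ <;> simp only [List.length_cons, List.length_nil] at * <;> omega

theorem nil_notMem_applyRule (hφ : [] ∉ φ) : [] ∉ applyRule r φ := by
  fun_induction applyRule r φ <;> simp_all

theorem applyRule_nil_nil (hφ : [] ∉ φ) : applyRule ([], []) φ = φ := by
  fun_induction applyRule ([], []) φ <;> simp_all

theorem exists_append_of_applyRule_eq_append {P Q : List (Token α)}
    (h : applyRule r φ = P ++ Q) :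
    ∃ A B, φ = A ++ B ∧ applyRule r A = P ∧ applyRule r B = Q := by
  induction φ using applyRule.induct r generalizing P with
  | case1 =>
    obtain ⟨rfl, rfl⟩ := List.append_eq_nil_iff.1 h.symm
    exact ⟨[], [], rfl, rfl, rfl⟩
  | case2 t =>
    obtain ⟨rfl, rfl⟩ | ⟨rfl, rfl⟩ := List.append_eq_singleton_iff.1 h.symm
    · exact ⟨[], [t], rfl, rfl, rfl⟩
    · exact ⟨[t], [], rfl, rfl, rfl⟩
  | case3 t u rest hmerge ih =>
    rcases P with _ | ⟨p, P⟩
    · exact ⟨[], t :: u :: rest, rfl, rfl, h⟩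
    rw [applyRule, if_pos hmerge, List.cons_append, List.cons.injEq] at h
    obtain ⟨A, B, rfl, rfl, rfl⟩ := ih h.2
    exact ⟨t :: u :: A, B, rfl, by rw [applyRule, if_pos hmerge, h.1], rfl⟩
  | case4 t u rest hmerge ih =>
    rcases P with _ | ⟨p, P⟩
    · exact ⟨[], t :: u :: rest, rfl, rfl, h⟩
    rw [applyRule, if_neg hmerge, List.cons_append, List.cons.injEq] at h
    obtain ⟨rfl, h⟩ := h
    obtain ⟨_ | ⟨a, A⟩, B, hAB, rfl, rfl⟩ := ih h
    · exact ⟨[t], B, congrArg (t :: ·) hAB, rfl, rfl⟩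
    · obtain ⟨rfl, rfl⟩ := List.cons.inj hAB
      exact ⟨t :: u :: A, B, rfl, by rw [applyRule, if_neg hmerge], rfl⟩

/- Whether a merge crosses the junction of `A` and `x :: X` depends only on `A` and `x`. -/
theorem applyRule_append_cons_congr {A X : List (Token α)} {x : Token α} (hx : x ≠ [])
    (h : applyRule r (A ++ x :: X) = applyRule r A ++ applyRule r (x :: X))
    (Y : List (Token α)) :
    applyRule r (A ++ x :: Y) = applyRule r A ++ applyRule r (x :: Y) := by
  induction A using applyRule.induct r with
  | case1 => rfl
  | case2 t =>
    have hmerge : ¬(t = r.1 ∧ x = r.2) := by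
      rintro ⟨rfl, rfl⟩
      simp_all [applyRule]
    simp [applyRule, hmerge]
  | case3 t u rest hmerge ih =>
    simp only [List.cons_append, applyRule, if_pos hmerge, List.cons.injEq, true_and] at h ⊢
    exact ih h
  | case4 t u rest hmerge ih =>
    simp only [List.cons_append, applyRule, if_neg hmerge, List.cons.injEq, true_and] at h ⊢
    exact ih h

end ApplyRule

section Stages

variable {D : Dict α} {i k : ℕ} {s u v w : List α}

omit [DecidableEq α] in
theorem flatten_phi0 (s : List α) : (phi0 s).flatten = s := by
  induction s with
  | nil => rfl
  | cons a s ih => exact congrArg (a :: ·) ih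

theorem flatten_phiK (D : Dict α) (k : ℕ) (s : List α) : (phiK D k s).flatten = s :=
  List.foldlRecOn (motive := fun φ => φ.flatten = s) _ _ (flatten_phi0 s)
    fun φ hφ r _ => (flatten_applyRule r φ).trans hφ

theorem nil_notMem_phiK (D : Dict α) (k : ℕ) (s : List α) : [] ∉ phiK D k s :=
  List.foldlRecOn (motive := fun φ => [] ∉ φ) _ _ (by simp [phi0])
    fun _ hφ _ _ => nil_notMem_applyRule hφ

/- Tokens are never empty, so the default rule `([], [])` does nothing past the end of `D`. -/
theorem phiK_succ (D : Dict α) (k : ℕ) (s : List α) :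
    phiK D (k + 1) s = applyRule (D.getD k ([], [])) (phiK D k s) := by
  rcases lt_or_ge k D.length with hk | hk
  · rw [List.getD_eq_getElem _ _ hk, phiK, phiK, List.take_succ_eq_append_getElem hk,
      List.foldl_append]
    rfl
  · rw [List.getD_eq_default _ _ hk, applyRule_nil_nil (nil_notMem_phiK D k s), phiK, phiK,
      List.take_of_length_le hk, List.take_of_length_le (hk.trans k.le_succ)]

theorem phiK_nil (D : Dict α) (k : ℕ) : phiK D k ([] : List α) = [] := by
  induction k with
  | zero => rfl
  | succ k ih => rw [phiK_succ, ih, applyRule]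

theorem phiK_ne_nil (D : Dict α) (k : ℕ) (hs : s ≠ []) : phiK D k s ≠ [] := fun h =>
  hs <| by rw [← flatten_phiK D k s, h, List.flatten_nil]

theorem phiK_eq_singleton_mono (hik : i ≤ k) (h : phiK D i s = [s]) : phiK D k s = [s] := by
  induction k, hik using Nat.le_induction with
  | base => exact h
  | succ k _ ih => rw [phiK_succ, ih, applyRule]

theorem phiK_append_unique {P Q : List (Token α)} (h : phiK D k (u ++ v) = P ++ Q)
    (hP : P.flatten = u) : phiK D k u = P ∧ phiK D k v = Q := by
  induction k generalizing P Q with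
  | zero =>
    obtain ⟨a, b, hab, rfl, rfl⟩ := List.map_eq_append_iff.1 h
    obtain rfl : a = u := (flatten_phi0 a).symm.trans hP
    obtain rfl : v = b := List.append_cancel_left hab
    exact ⟨rfl, rfl⟩
  | succ k ih =>
    rw [phiK_succ] at h
    obtain ⟨A, B, hAB, rfl, rfl⟩ := exists_append_of_applyRule_eq_append h
    obtain ⟨rfl, rfl⟩ := ih hAB ((flatten_applyRule _ A).symm.trans hP)
    exact ⟨phiK_succ D k u, phiK_succ D k v⟩

/-- No token of `φ_k(uv)` straddles the junction of `u` and `v`. This is encoded as `φ_k` being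
additive there, which is equivalent by `phiK_append_unique`. -/
def IsBoundary (D : Dict α) (k : ℕ) (u v : List α) : Prop :=
  phiK D k (u ++ v) = phiK D k u ++ phiK D k v

namespace IsBoundary

theorem of_phiK_eq_append {P Q : List (Token α)} (h : phiK D k (u ++ v) = P ++ Q)
    (hP : P.flatten = u) : IsBoundary D k u v := by
  obtain ⟨rfl, rfl⟩ := phiK_append_unique h hP
  exact h

theorem nil_left (D : Dict α) (k : ℕ) (v : List α) : IsBoundary D k [] v := by
  rw [IsBoundary, phiK_nil, List.nil_append, List.nil_append]

theorem of_succ (h : IsBoundary D (k + 1) u v) : IsBoundary D k u v := by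
  rw [IsBoundary, phiK_succ] at h
  obtain ⟨A, B, hAB, hA, -⟩ := exists_append_of_applyRule_eq_append h
  exact of_phiK_eq_append hAB <| by rw [← flatten_applyRule, hA, flatten_phiK]

theorem anti (hik : i ≤ k) (h : IsBoundary D k u v) : IsBoundary D i u v :=
  Nat.decreasingInduction (fun _ _ => of_succ) h hik

theorem append_left (huvw : IsBoundary D k u (v ++ w)) (hvw : IsBoundary D k v w) :
    IsBoundary D k (u ++ v) w :=
  of_phiK_eq_append (P := phiK D k u ++ phiK D k v)
    (by rw [List.append_assoc, huvw, hvw, List.append_assoc])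
    (by rw [List.flatten_append, flatten_phiK, flatten_phiK])

theorem append_right (hv : v ≠ []) (huv : IsBoundary D k u v) (hvw : IsBoundary D k v w) :
    IsBoundary D k u (v ++ w) := by
  induction k with
  | zero => simp [IsBoundary, phiK, phi0]
  | succ k ih =>
    have ih_uvw : IsBoundary D k u (v ++ w) := ih huv.of_succ hvw.of_succ
    obtain ⟨x, X, hxX⟩ := List.exists_cons_of_ne_nil (phiK_ne_nil D k hv)
    have hx : x ≠ [] := by
      rintro rfl
      exact nil_notMem_phiK D k v (hxX ▸ List.mem_cons_self)
    have huv_succ := huv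
    rw [IsBoundary, phiK_succ, phiK_succ, phiK_succ, huv.of_succ, hxX] at huv_succ
    rw [IsBoundary, phiK_succ, phiK_succ, phiK_succ, ih_uvw, hvw.of_succ, hxX]
    exact applyRule_append_cons_congr hx huv_succ _

end IsBoundary

end Stages

section Canonical

variable {D : Dict α} {t : Token α}

theorem IsCanonical.ne_nil (htc : IsCanonical D t) : t ≠ [] := by
  rintro rfl
  exact List.cons_ne_nil _ _ (htc.symm.trans (phiK_nil D D.length))

theorem length_phiK_eq_two_of_succ_eq_singleton {k : ℕ} (hk : phiK D k t ≠ [t])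
    (hk_succ : phiK D (k + 1) t = [t]) : (phiK D k t).length = 2 := by
  have hle : (phiK D k t).length ≤ 2 := by
    have h := length_le_two_mul_length_applyRule (D.getD k ([], [])) (phiK D k t)
    rwa [← phiK_succ, hk_succ] at h
  have hflat := flatten_phiK D k t
  match hφ : phiK D k t with
  | [] => simp [phiK_succ, hφ, applyRule] at hk_succ
  | [a] => simp_all
  | [_, _] => rfl
  | _ :: _ :: _ :: _ => simp [hφ] at hle

theorem exists_isCanonicalRuleIdx (htl : 1 < t.length) (htc : IsCanonical D t) :
    ∃ j, IsCanonicalRuleIdx D t j := by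
  have hzero : phiK D 0 t ≠ [t] := fun h => htl.ne' <| by
    simpa [phiK, phi0] using congrArg List.length h
  obtain ⟨j, hj, hj_succ⟩ :=
    Nat.exists_not_and_succ_of_not_zero_of_exists (p := fun k => phiK D k t = [t]) hzero ⟨_, htc⟩
  exact ⟨j, not_le.1 fun hle => hj (phiK_eq_singleton_mono hle htc),
    length_phiK_eq_two_of_succ_eq_singleton hj hj_succ, hj_succ⟩

theorem isCanonicalRuleIdx_canonIdx (htl : 1 < t.length) (htc : IsCanonical D t) :
    IsCanonicalRuleIdx D t (canonIdx D t) := by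
  have hex := exists_isCanonicalRuleIdx htl htc
  rw [canonIdx, dif_pos hex]
  exact hex.choose_spec

theorem canonIdx_lt_length (htl : 1 < t.length) (htc : IsCanonical D t) :
    canonIdx D t < D.length :=
  (isCanonicalRuleIdx_canonIdx htl htc).1

theorem phiK_canonIdx (htl : 1 < t.length) (htc : IsCanonical D t) :
    phiK D (canonIdx D t) t = [pre D t, suc D t] := by
  obtain ⟨-, hlen, -⟩ := isCanonicalRuleIdx_canonIdx htl htc
  obtain ⟨a, b, hab⟩ := List.length_eq_two.1 hlen
  simp [pre, suc, hab]

theorem pre_ne_nil (htl : 1 < t.length) (htc : IsCanonical D t) : pre D t ≠ [] := fun h =>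
  nil_notMem_phiK D (canonIdx D t) t <| by simp [phiK_canonIdx htl htc, h]

theorem pre_append_suc (htl : 1 < t.length) (htc : IsCanonical D t) :
    pre D t ++ suc D t = t := by
  simpa [phiK_canonIdx htl htc] using flatten_phiK D (canonIdx D t) t

theorem phiK_canonIdx_pre_append_suc (htl : 1 < t.length) (htc : IsCanonical D t) :
    phiK D (canonIdx D t) (pre D t ++ suc D t) = [pre D t] ++ [suc D t] := by
  rw [pre_append_suc htl htc, phiK_canonIdx htl htc, List.singleton_append]

theorem isBoundary_pre_suc (htl : 1 < t.length) (htc : IsCanonical D t) :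
    IsBoundary D (canonIdx D t) (pre D t) (suc D t) :=
  .of_phiK_eq_append (phiK_canonIdx_pre_append_suc htl htc) List.flatten_singleton

theorem phiK_canonIdx_suc (htl : 1 < t.length) (htc : IsCanonical D t) :
    phiK D (canonIdx D t) (suc D t) = [suc D t] :=
  (phiK_append_unique (phiK_canonIdx_pre_append_suc htl htc) List.flatten_singleton).2

theorem isCanonical_suc (htl : 1 < t.length) (htc : IsCanonical D t) :
    IsCanonical D (suc D t) :=
  phiK_eq_singleton_mono (canonIdx_lt_length htl htc).le (phiK_canonIdx_suc htl htc)

theorem canonIdx_suc_lt (htl : 1 < t.length) (htc : IsCanonical D t)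
    (hsl : 1 < (suc D t).length) : canonIdx D (suc D t) < canonIdx D t := by
  by_contra! hle
  have hsingle := phiK_eq_singleton_mono hle (phiK_canonIdx_suc htl htc)
  have hpair := phiK_canonIdx hsl (isCanonical_suc htl htc)
  simp [hsingle] at hpair

theorem suc_singleton (D : Dict α) (c : α) : suc D [c] = [c] := by
  have h : phiK D (canonIdx D [c]) [c] = [[c]] :=
    phiK_eq_singleton_mono (Nat.zero_le _) rfl
  rw [suc, h]
  rfl

end Canonical

section AncestorPath

variable {D : Dict α} {a u z : Token α}

/- Atomic tokens are fixed by `suc`, so only non-atomic tokens need a step. -/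
theorem InPath.induction_on_canonical {motive : Token α → Prop} (hz : IsCanonical D z)
    (self : motive z)
    (suc_step : ∀ b, 1 < b.length → IsCanonical D b → InPath D z b → motive b → motive (suc D b))
    (ha : InPath D z a) : motive a := by
  obtain ⟨n, rfl⟩ := ha
  suffices IsCanonical D ((suc D)^[n] z) ∧ motive ((suc D)^[n] z) from this.2
  induction n with
  | zero => exact ⟨hz, self⟩
  | succ n ih =>
    rw [Function.iterate_succ_apply']
    have hpath : InPath D z ((suc D)^[n] z) := ⟨n, rfl⟩
    generalize (suc D)^[n] z = b at ih hpath ⊢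
    obtain ⟨hb, hmotive⟩ := ih
    match b with
    | [] => exact absurd rfl hb.ne_nil
    | [c] => rw [suc_singleton]; exact ⟨hb, hmotive⟩
    | c :: d :: l =>
      have hl : 1 < (c :: d :: l).length := by simp
      exact ⟨isCanonical_suc hl hb, suc_step _ hl hb hpath hmotive⟩

theorem InPath.eq_or_exists_child (hz : IsCanonical D z) (ha : InPath D z a) :
    z = a ∨ ∃ u, 1 < u.length ∧ IsCanonical D u ∧ suc D u = a ∧ InPath D z u :=
  ha.induction_on_canonical (motive := fun a => z = a ∨
      ∃ u, 1 < u.length ∧ IsCanonical D u ∧ suc D u = a ∧ InPath D z u) hz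
    (.inl rfl) fun b hl hb hpath _ => .inr ⟨b, hl, hb, rfl, hpath⟩

/- Priorities increase strictly along the path, so of the boundaries inside the tokens from `z`
down to `u`, the one inside `u` disappears first. -/
theorem InPath.exists_isBoundary_suc (hz : IsCanonical D z) (hu : InPath D z u)
    (hul : 1 < u.length) :
    ∃ v, z = v ++ suc D u ∧ IsBoundary D (canonIdx D u) v (suc D u) := by
  refine hu.induction_on_canonical hz
    (motive := fun u => 1 < u.length →
      ∃ v, z = v ++ suc D u ∧ IsBoundary D (canonIdx D u) v (suc D u)) ?_ ?_ hul
  · intro hzl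
    exact ⟨pre D z, (pre_append_suc hzl hz).symm, isBoundary_pre_suc hzl hz⟩
  · intro b hl hb _ ih hsl
    obtain ⟨v, hv, hbd⟩ := ih hl
    have hs := isCanonical_suc hl hb
    have hsplit := pre_append_suc hsl hs
    have hbd_suc : IsBoundary D (canonIdx D (suc D b)) v
        (pre D (suc D b) ++ suc D (suc D b)) := by
      rw [hsplit]
      exact hbd.anti (canonIdx_suc_lt hl hb hsl).le
    exact ⟨v ++ pre D (suc D b), by rw [List.append_assoc, hsplit, hv],
      hbd_suc.append_left (isBoundary_pre_suc hsl hs)⟩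

end AncestorPath

section PrefixLastToken

variable {D : Dict α} {s t w : List α}

omit [DecidableEq α] in
theorem dropSuffix_append (u v : List α) : dropSuffix (u ++ v) v = u := by
  rw [dropSuffix, List.length_append, Nat.add_sub_cancel, List.take_left]

theorem exists_isBoundary_theta (D : Dict α) (hs : s ≠ []) :
    IsCanonical D (theta D s) ∧
      ∃ p, s = p ++ theta D s ∧ IsBoundary D D.length p (theta D s) := by
  obtain ⟨P, z, hPz⟩ := List.eq_nil_or_concat' (tokenize D s) |>.resolve_left
    (phiK_ne_nil D D.length hs)
  have hθ : theta D s = z := by rw [theta, hPz, List.getLastD_concat]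
  have hsz : s = P.flatten ++ z := by
    have hflat : (tokenize D s).flatten = s := flatten_phiK D D.length s
    rw [← hflat, hPz, List.flatten_concat]
  have htok : phiK D D.length (P.flatten ++ z) = P ++ [z] := hsz ▸ hPz
  rw [hθ]
  exact ⟨(phiK_append_unique htok rfl).2, P.flatten, hsz, .of_phiK_eq_append htok rfl⟩

theorem PLTC.isBoundary_pre (htl : 1 < t.length) (htc : IsCanonical D t)
    (hplt : PLTC D (w ++ t) t) : IsBoundary D (canonIdx D t) w (pre D t) := by
  obtain hatomic | ⟨-, hreach, hdom⟩ := hplt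
  · exact absurd hatomic htl.ne'
  have hdrop : dropSuffix (w ++ t) (suc D t) = w ++ pre D t := by
    have hsplit : w ++ t = w ++ pre D t ++ suc D t := by
      rw [List.append_assoc, pre_append_suc htl htc]
    rw [hsplit, dropSuffix_append]
  rw [hdrop] at hreach hdom
  obtain ⟨hz, p, hp, hpz⟩ := exists_isBoundary_theta D
    (List.append_ne_nil_of_right_ne_nil w (pre_ne_nil htl htc))
  generalize theta D (w ++ pre D t) = z at *
  obtain ⟨v, rfl, hv⟩ : ∃ v, z = v ++ pre D t ∧ IsBoundary D (canonIdx D t) v (pre D t) := by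
    by_cases hne : z = pre D t
    · exact ⟨[], hne, .nil_left D _ _⟩
    obtain ⟨u, hul, huc, hsuc, hu⟩ := (hreach.eq_or_exists_child hz).resolve_left hne
    obtain ⟨v, hzv, hv⟩ := hu.exists_isBoundary_suc hz hul
    rw [hsuc] at hzv hv
    exact ⟨v, hzv, hv.anti (hdom hne u hul huc hsuc hu).le⟩
  obtain rfl : w = p ++ v := List.append_cancel_right (hp.trans (List.append_assoc ..).symm)
  exact (hpz.anti (canonIdx_lt_length htl htc).le).append_left hv

end PrefixLastToken

theorem exclusive_priorities_general {D : Dict α} {s t : List α} (htl : 1 < t.length)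
    (htc : IsCanonical D t) (hts : t <:+ s) (hplt : PLTC D s t) :
    ∃ η : List (Token α), phiK D (canonIdx D t) s = η ++ [pre D t, suc D t] := by
  obtain ⟨w, rfl⟩ := hts
  have hpre : IsBoundary D (canonIdx D t) w (pre D t) := hplt.isBoundary_pre htl htc
  have ht : IsBoundary D (canonIdx D t) w t := by
    simpa only [pre_append_suc htl htc] using
      hpre.append_right (pre_ne_nil htl htc) (isBoundary_pre_suc htl htc)
  exact ⟨phiK D (canonIdx D t) w, by rw [ht, phiK_canonIdx htl htc]⟩

/-- **Exclusive priorities.** If the non-atomic canonical suffix token `t` of the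
nonempty string `s` satisfies the Prefix Last-Token Condition with respect to `s`,
then the token list immediately before its canonical rule is applied ends with
exactly the two tokens `pre t` and `suc t`. -/
theorem exclusive_priorities [Fintype α] (D : Dict α) (hD : ValidDict D)
    (s : List α) (hs : s ≠ [])
    (t : Token α) (htl : 1 < t.length) (htc : IsCanonical D t) (hts : t <:+ s)
    (hplt : PLTC D s t) :
    ∃ η : List (Token α), phiK D (canonIdx D t) s = η ++ [pre D t, suc D t] :=
  exclusive_priorities_general htl htc hts hplt

end BPE
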